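/- Let (a_n)_{n≥1} be a sequence of integers. Then (a_n) is a periodic Lefschetz sequence if and only if (a_n) is a bounded Dold sequence. -/

import Mathlib

/-- A sequence `(a n)` of integers (indexed by `n ≥ 1`) is a Dold sequence if for every
`n ≥ 1`, `n` divides `∑_{d ∣ n} μ(n/d) · a d`. -/
def DoldSeq (a : ℕ → ℤ) : Prop :=
  ∀ n : ℕ, 1 ≤ n →
    (n : ℤ) ∣ ∑ d ∈ n.divisors, ArithmeticFunction.moebius (n / d) * a d

/-- A sequence `(a n)` of integers is a Lefschetz sequence if there are square integer
matrices `A` and `B` (possibly of different sizes) with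
`a n = trace (A ^ n) − trace (B ^ n)` for all `n ≥ 1`. -/
def IsLefschetzSeq (a : ℕ → ℤ) : Prop :=
  ∃ (k l : ℕ) (A : Matrix (Fin k) (Fin k) ℤ) (B : Matrix (Fin l) (Fin l) ℤ),
    ∀ n : ℕ, 1 ≤ n → a n = (A ^ n).trace - (B ^ n).trace

/-! The power series units `1 - X ^ d` and `det (1 - X A)` have logarithmic derivatives `X u' / u`
with `n`-th coefficients `-d · [d ∣ n]` and, by Jacobi's formula, `-tr (A ^ n)`.

For every unit `u` of `ℤ⟦X⟧` the coefficients of `X u' / u` form a Dold sequence: the first nonzero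
coefficient is divisible by its index, and the earlier ones can be cleared by dividing `u` by a
product of powers of the `1 - X ^ d`. Hence Lefschetz sequences are Dold sequences.

Conversely, let `a` be a Dold sequence with `|a n| ≤ T`. Its Möbius transform at `n` is a multiple
of `n` of absolute value at most `2 √n T`, so it vanishes for `n > 4 T ^ 2`. Möbius inversion then
writes `a` as a finite integral combination of the sequences `d · [d ∣ n]`, which are periodic and
are the traces of the powers of the permutation matrices of `d`-cycles.
-/

section MoebiusTransform

open ArithmeticFunction

variable {M : Type*} [AddCommGroup M]

/-- The Möbius transform `n ↦ ∑_{d ∣ n} μ(n/d) a_d`, so that a Dold sequence is one whose transform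
at each `n ≥ 1` is divisible by `n`. Its value at `0` is the empty sum. -/
def moebiusTransform (a : ℕ → M) (n : ℕ) : M :=
  ∑ d ∈ n.divisors, moebius (n / d) • a d

lemma sum_divisors_moebiusTransform (a : ℕ → M) {n : ℕ} (hn : 0 < n) :
    ∑ d ∈ n.divisors, moebiusTransform a d = a n :=
  sum_eq_iff_sum_smul_moebius_eq.2
    (fun _ _ ↦ Nat.sum_divisorsAntidiagonal' (f := fun x y ↦ moebius x • a y)) n hn

lemma sum_Icc_ite_dvd_moebiusTransform (a : ℕ → M) {n K : ℕ} (hn : 0 < n)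
    (hK : ∀ d ∈ n.divisors, K < d → moebiusTransform a d = 0) :
    ∑ d ∈ Finset.Icc 1 K, (if d ∣ n then moebiusTransform a d else 0) = a n := by
  rw [← sum_divisors_moebiusTransform a hn, ← Finset.sum_filter]
  refine Finset.sum_subset (fun d hd ↦ ?_) fun d hd hd' ↦ hK d hd ?_
  · exact Nat.mem_divisors.2 ⟨(Finset.mem_filter.1 hd).2, hn.ne'⟩
  · simp only [Finset.mem_filter, Finset.mem_Icc, not_and'] at hd'
    have := hd' (Nat.dvd_of_mem_divisors hd)
    have := Nat.pos_of_mem_divisors hd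
    omega

end MoebiusTransform

lemma card_divisors_le_two_mul_sqrt (n : ℕ) : n.divisors.card ≤ 2 * n.sqrt := by
  have hcover : n.divisors ⊆
      Finset.Icc 1 n.sqrt ∪ Finset.image (n / ·) (Finset.Icc 1 n.sqrt) := by
    intro d hd
    obtain ⟨⟨e, rfl⟩, hde⟩ := Nat.mem_divisors.1 hd
    obtain ⟨hd0, he0⟩ := Nat.mul_ne_zero_iff.1 hde
    simp only [Finset.mem_union, Finset.mem_Icc, Finset.mem_image]
    rcases le_total d e with hle | hle
    · exact .inl ⟨hd0.pos, Nat.le_sqrt.2 (Nat.mul_le_mul_left d hle)⟩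
    · exact .inr ⟨e, ⟨he0.pos, Nat.le_sqrt.2 (Nat.mul_le_mul_right e hle)⟩,
        Nat.mul_div_cancel d he0.pos⟩
  calc n.divisors.card
      ≤ (Finset.Icc 1 n.sqrt).card + (Finset.image (n / ·) (Finset.Icc 1 n.sqrt)).card :=
        (Finset.card_le_card hcover).trans (Finset.card_union_le _ _)
    _ ≤ (Finset.Icc 1 n.sqrt).card + (Finset.Icc 1 n.sqrt).card :=
        Nat.add_le_add_left Finset.card_image_le _
    _ = 2 * n.sqrt := by rw [Nat.card_Icc]; omega

lemma abs_moebiusTransform_le {G : Type*} [AddCommGroup G] [LinearOrder G] [IsOrderedAddMonoid G]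
    {a : ℕ → G} {T : G} (hT : ∀ n, 1 ≤ n → |a n| ≤ T) (n : ℕ) :
    |moebiusTransform a n| ≤ n.divisors.card • T := by
  refine (Finset.abs_sum_le_sum_abs _ _).trans (Finset.sum_le_card_nsmul _ _ _ fun d hd ↦ ?_)
  rw [abs_zsmul]
  calc |ArithmeticFunction.moebius (n / d)| • |a d| ≤ (1 : ℤ) • |a d| :=
        zsmul_le_zsmul_left (abs_nonneg _) ArithmeticFunction.abs_moebius_le_one
    _ ≤ T := by rw [one_zsmul]; exact hT d (Nat.pos_of_mem_divisors hd)

lemma DoldSeq.moebiusTransform_eq_zero {a : ℕ → ℤ} (ha : DoldSeq a) {T : ℤ}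
    (hT : ∀ n, 1 ≤ n → |a n| ≤ T) {n : ℕ} (hn : 4 * T ^ 2 < n) : moebiusTransform a n = 0 := by
  by_contra hne
  have hpos : 0 < n := by exact_mod_cast (by positivity : 0 ≤ 4 * T ^ 2).trans_lt hn
  have hT0 : 0 ≤ T := (abs_nonneg _).trans (hT 1 le_rfl)
  have hle : (n : ℤ) ≤ 2 * n.sqrt * T := calc
    (n : ℤ) ≤ |moebiusTransform a n| :=
      Int.le_of_dvd (abs_pos.2 hne) ((dvd_abs _ _).2 (ha n hpos))
    _ ≤ n.divisors.card • T := abs_moebiusTransform_le hT n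
    _ = n.divisors.card * T := nsmul_eq_mul _ _
    _ ≤ 2 * n.sqrt * T := by
      gcongr; exact_mod_cast card_divisors_le_two_mul_sqrt n
  have hsq : (n : ℤ) * n ≤ n * (4 * T ^ 2) := calc
    (n : ℤ) * n ≤ (2 * n.sqrt * T) * (2 * n.sqrt * T) := by gcongr
    _ = (n.sqrt * n.sqrt : ℕ) * (4 * T ^ 2) := by push_cast; ring
    _ ≤ n * (4 * T ^ 2) := by gcongr; exact Nat.sqrt_le n
  exact hn.not_ge (le_of_mul_le_mul_left hsq (by exact_mod_cast hpos))

section EulerLogDeriv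

open PowerSeries

lemma coeff_X_mul_derivative {R : Type*} [CommSemiring R] (f : R⟦X⟧) (n : ℕ) :
    coeff n (X * d⁄dX R f) = n * coeff n f := by
  cases n with
  | zero => simp
  | succ n => rw [coeff_succ_X_mul, coeff_derivative, mul_comm, Nat.cast_succ]

variable {R : Type*} [CommRing R]

/-- The logarithmic derivative `X u' / u` of a unit `u` for the Euler operator `X d/dX`. For
`u = exp (∑ a_n X ^ n / n)` it is the generating function `∑ a_n X ^ n`. -/
noncomputable def eulerLogDeriv : Additive R⟦X⟧ˣ →+ R⟦X⟧ where
  toFun u := X * d⁄dX R (u.toMul : R⟦X⟧) * ↑u.toMul⁻¹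
  map_zero' := by simp
  map_add' u v := by
    simp only [toMul_add, Units.val_mul, Derivation.leibniz, smul_eq_mul, mul_inv]
    linear_combination X * d⁄dX R (v.toMul : R⟦X⟧) * ↑v.toMul⁻¹ * u.toMul.mul_inv +
      X * d⁄dX R (u.toMul : R⟦X⟧) * ↑u.toMul⁻¹ * v.toMul.mul_inv

lemma eulerLogDeriv_apply (u : Additive R⟦X⟧ˣ) :
    eulerLogDeriv u = X * d⁄dX R (u.toMul : R⟦X⟧) * ((u.toMul⁻¹ : R⟦X⟧ˣ) : R⟦X⟧) := rfl

lemma natCast_dvd_coeff_eulerLogDeriv (u : Additive R⟦X⟧ˣ) {n : ℕ}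
    (hu : ∀ m < n, coeff m (eulerLogDeriv u) = 0) : (n : R) ∣ coeff n (eulerLogDeriv u) := by
  obtain ⟨w, hw⟩ := X_pow_dvd_iff.2 hu
  have hcoeff (f : R⟦X⟧) : coeff n (X ^ n * f) = constantCoeff f := by
    simpa using coeff_X_pow_mul f n 0
  have heuler : X ^ n * (w * (u.toMul : R⟦X⟧)) = X * d⁄dX R (u.toMul : R⟦X⟧) := by
    rw [← mul_assoc, ← hw, eulerLogDeriv_apply, mul_assoc, Units.inv_mul, mul_one]
  have hunit : IsUnit (constantCoeff (u.toMul : R⟦X⟧)) := u.toMul.isUnit.map constantCoeff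
  rw [hw, hcoeff, ← hunit.dvd_mul_right, ← map_mul, ← hcoeff, heuler, coeff_X_mul_derivative]
  exact dvd_mul_right _ _

lemma one_sub_X_pow_mul_expand_mk_one {d : ℕ} (hd : d ≠ 0) :
    (1 - X ^ d) * expand d hd (mk 1 : R⟦X⟧) = 1 := by
  rw [← expand_X d hd, ← map_one (expand d hd), ← map_sub, ← map_mul, mul_comm,
    mk_one_mul_one_sub_eq_one, map_one]

/-- The power series `1 - X ^ d` as a unit: the Euler factor of a cycle of length `d`. -/
noncomputable def oneSubXPow (R : Type*) [CommRing R] {d : ℕ} (hd : d ≠ 0) : R⟦X⟧ˣ :=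
  Units.mkOfMulEqOne (1 - X ^ d) (expand d hd (mk 1)) (one_sub_X_pow_mul_expand_mk_one hd)

lemma coeff_eulerLogDeriv_oneSubXPow {d n : ℕ} (hd : d ≠ 0) (hn : n ≠ 0) :
    coeff n (eulerLogDeriv (Additive.ofMul (oneSubXPow R hd))) =
      -(if d ∣ n then (d : R) else 0) := by
  have hderiv : (X : R⟦X⟧) * d⁄dX R (1 - X ^ d) = -((d : R⟦X⟧) * (X : R⟦X⟧) ^ d) := by
    obtain ⟨k, rfl⟩ := Nat.exists_eq_add_one_of_ne_zero hd
    rw [map_sub, Derivation.map_one_eq_zero, Derivation.leibniz_pow, derivative_X, nsmul_eq_mul,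
      smul_eq_mul, Nat.add_sub_cancel]
    ring
  have hlog : eulerLogDeriv (Additive.ofMul (oneSubXPow R hd)) =
      -(C (d : R) * expand d hd (mk 1 - 1 : R⟦X⟧)) := by
    rw [eulerLogDeriv_apply]
    change X * d⁄dX R (1 - X ^ d : R⟦X⟧) * expand d hd (mk 1) = _
    rw [hderiv, map_sub, map_one, map_natCast]
    linear_combination (d : R⟦X⟧) * one_sub_X_pow_mul_expand_mk_one (R := R) hd
  rw [hlog, map_neg, coeff_C_mul, coeff_expand, mul_ite, mul_zero]
  congr 1
  refine if_ctx_congr Iff.rfl (fun hdvd ↦ ?_) fun _ ↦ rfl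
  have : n / d ≠ 0 := (Nat.div_pos (Nat.le_of_dvd hn.pos hdvd) hd.pos).ne'
  simp [coeff_one, this]

lemma exists_coeff_eulerLogDeriv_eq_sum (c : ℕ → ℤ) {s : Finset ℕ} (hs : ∀ d ∈ s, d ≠ 0) :
    ∃ v : Additive R⟦X⟧ˣ, ∀ n ≠ 0,
      coeff n (eulerLogDeriv v) = ∑ d ∈ s, if d ∣ n then (d * c d : R) else 0 := by
  refine ⟨-∑ d ∈ s.attach, c d • Additive.ofMul (oneSubXPow R (hs d d.2)), fun n hn ↦ ?_⟩
  rw [← s.sum_attach]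
  simp only [map_neg, map_sum, map_zsmul, ← Finset.sum_neg_distrib]
  refine Finset.sum_congr rfl fun d _ ↦ ?_
  rw [coeff_eulerLogDeriv_oneSubXPow (hs d d.2) hn, zsmul_eq_mul]
  split_ifs <;> simp [mul_comm]

-- If the Möbius transform equals `d c_d` at all `d ≤ n`, then dividing `u` by
-- `∏_{d ≤ n} (1 - X ^ d) ^ (-c_d)` kills the first `n` coefficients of its logarithmic derivative
-- and leaves the transform at `n + 1` as the next one.
theorem doldSeq_coeff_eulerLogDeriv (u : Additive ℤ⟦X⟧ˣ) :
    DoldSeq fun n ↦ coeff n (eulerLogDeriv u) := by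
  set a : ℕ → ℤ := fun n ↦ coeff n (eulerLogDeriv u)
  change ∀ n : ℕ, 1 ≤ n → (n : ℤ) ∣ moebiusTransform a n
  intro n hn
  induction n using Nat.strong_induction_on with | _ n ih
  obtain ⟨n, rfl⟩ := Nat.exists_eq_add_of_le' hn
  choose! c hc using ih
  obtain ⟨v, hv⟩ := exists_coeff_eulerLogDeriv_eq_sum (R := ℤ) c (s := Finset.Icc 1 n)
    fun d hd ↦ Nat.pos_iff_ne_zero.1 (Finset.mem_Icc.1 hd).1
  have hsum (m : ℕ) (hm : m ≠ 0) : coeff m (eulerLogDeriv v) =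
      ∑ d ∈ Finset.Icc 1 n, if d ∣ m then moebiusTransform a d else 0 := by
    rw [hv m hm]
    refine Finset.sum_congr rfl fun d hd ↦ ?_
    obtain ⟨hd1, hdn⟩ := Finset.mem_Icc.1 hd
    rw [hc d (by omega) hd1, Int.cast_id]
  have hlow (m : ℕ) (hm : m < n + 1) : coeff m (eulerLogDeriv (u - v)) = 0 := by
    rcases m.eq_zero_or_pos with rfl | hm0
    · simp [eulerLogDeriv_apply]
    rw [map_sub, map_sub, hsum m hm0.ne', sum_Icc_ite_dvd_moebiusTransform a hm0, sub_self]
    intro d hd hnd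
    have := Nat.divisor_le hd
    omega
  have htop : coeff (n + 1) (eulerLogDeriv (u - v)) = moebiusTransform a (n + 1) := by
    have hfull := sum_Icc_ite_dvd_moebiusTransform a n.succ_pos
      fun d hd hnd ↦ absurd (Nat.divisor_le hd) hnd.not_ge
    rw [Finset.sum_Icc_succ_top (by omega), if_pos dvd_rfl, ← hsum _ n.succ_ne_zero] at hfull
    rw [map_sub, map_sub, sub_eq_iff_eq_add', hfull]
  exact htop ▸ natCast_dvd_coeff_eulerLogDeriv (u - v) hlow

end EulerLogDeriv

section Matrix

open Matrix PowerSeries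

variable {ι : Type*} [DecidableEq ι]

lemma derivation_prod {R A M : Type*} [CommSemiring R] [CommSemiring A] [Algebra R A]
    [AddCommMonoid M] [Module A M] [Module R M] (D : Derivation R A M) (s : Finset ι) (f : ι → A) :
    D (∏ i ∈ s, f i) = ∑ i ∈ s, (∏ j ∈ s.erase i, f j) • D (f i) := by
  induction s using Finset.induction_on with
  | empty => simp
  | insert i s hi ih =>
    rw [Finset.prod_insert hi, D.leibniz, ih, Finset.sum_insert hi, Finset.erase_insert hi,
      add_comm, Finset.smul_sum]
    congr 1
    refine Finset.sum_congr rfl fun j hj ↦ ?_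
    rw [Finset.erase_insert_of_ne (ne_of_mem_of_not_mem hj hi).symm,
      Finset.prod_insert (fun h ↦ hi (Finset.mem_of_mem_erase h)), mul_smul]

variable [Fintype ι]

lemma derivation_det_eq_sum_det_updateCol {R A : Type*} [CommSemiring R] [CommRing A]
    [Algebra R A] (D : Derivation R A A) (M : Matrix ι ι A) :
    D M.det = ∑ i, (M.updateCol i fun j ↦ D (M j i)).det := by
  simp only [det_apply, map_sum]
  rw [Finset.sum_comm]
  refine Finset.sum_congr rfl fun σ _ ↦ ?_
  rw [Units.smul_def, map_zsmul, derivation_prod, ← Units.smul_def, Finset.smul_sum]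
  refine Finset.sum_congr rfl fun i _ ↦ congrArg (_ • ·) ?_
  rw [← Finset.prod_erase_mul _ _ (Finset.mem_univ i), updateCol_self, smul_eq_mul]
  congr 1
  exact Finset.prod_congr rfl fun j hj ↦ by rw [updateCol_ne (Finset.ne_of_mem_erase hj)]

lemma derivation_det {R A : Type*} [CommSemiring R] [CommRing A] [Algebra R A]
    (D : Derivation R A A) (M : Matrix ι ι A) : D M.det = (M.adjugate * M.map D).trace := by
  rw [derivation_det_eq_sum_det_updateCol]
  refine Finset.sum_congr rfl fun i _ ↦ ?_
  rw [← cramer_apply, cramer_eq_adjugate_mulVec]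
  rfl

/-- The generating function `∑ A ^ n X ^ n` of the powers of a square matrix, with the power series
inside the matrix. -/
def powSeries {S : Type*} [Semiring S] (M : Matrix ι ι S) : Matrix ι ι S⟦X⟧ :=
  of fun i j ↦ .mk fun n ↦ (M ^ n) i j

lemma coeff_trace_powSeries_mul_map_C {S : Type*} [Semiring S] (M : Matrix ι ι S) (n : ℕ) :
    coeff n (powSeries M * M.map C).trace = (M ^ (n + 1)).trace := by
  simp only [trace, diag, mul_apply, map_sum, powSeries, of_apply, map_apply, coeff_mul_C, coeff_mk,
    pow_succ]

lemma one_sub_X_smul_mul_powSeries {S : Type*} [Ring S] (M : Matrix ι ι S) :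
    (1 - (X : S⟦X⟧) • M.map C) * powSeries M = 1 := by
  rw [sub_mul, one_mul, smul_mul_assoc]
  ext i j n
  rw [Matrix.sub_apply, Matrix.smul_apply, mul_apply, map_sub, smul_eq_mul]
  cases n with
  | zero => by_cases hij : i = j <;> simp [powSeries, one_apply, hij]
  | succ n =>
    have hone : coeff (n + 1) ((1 : Matrix ι ι S⟦X⟧) i j) = 0 := by
      rw [one_apply]; split_ifs <;> simp [coeff_one]
    rw [coeff_succ_X_mul, map_sum, hone, sub_eq_zero]
    simp only [powSeries, of_apply, map_apply, coeff_C_mul, coeff_mk, pow_succ', mul_apply]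

variable {A : Type*} [CommRing A]

/-- The reversed characteristic polynomial `det (1 - X M)` as a unit of the power series ring. -/
noncomputable def charpolyRevUnit (M : Matrix ι ι A) : A⟦X⟧ˣ :=
  .mkOfMulEqOne (1 - (X : A⟦X⟧) • M.map C).det (powSeries M).det
    (by rw [← det_mul, one_sub_X_smul_mul_powSeries, det_one])

lemma adjugate_one_sub_X_smul (M : Matrix ι ι A) :
    (1 - (X : A⟦X⟧) • M.map C).adjugate = (charpolyRevUnit M : A⟦X⟧) • powSeries M := by
  set N := 1 - (X : A⟦X⟧) • M.map C
  calc N.adjugate = N.adjugate * (N * powSeries M) := by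
        rw [one_sub_X_smul_mul_powSeries, mul_one]
    _ = N.det • powSeries M := by rw [← mul_assoc, adjugate_mul, smul_mul, one_mul]

lemma eulerLogDeriv_charpolyRevUnit (M : Matrix ι ι A) :
    eulerLogDeriv (.ofMul (charpolyRevUnit M)) = -(X * (powSeries M * M.map C).trace) := by
  have hmap : (1 - (X : A⟦X⟧) • M.map C).map (d⁄dX A) = -M.map C := by
    ext1 i j
    by_cases hij : i = j <;> simp [hij, Derivation.leibniz]
  have hderiv : d⁄dX A (charpolyRevUnit M : A⟦X⟧) =
      -((charpolyRevUnit M : A⟦X⟧) * (powSeries M * M.map C).trace) := by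
    change d⁄dX A (1 - (X : A⟦X⟧) • M.map C).det = _
    rw [derivation_det, hmap, adjugate_one_sub_X_smul, Matrix.mul_neg, smul_mul, trace_neg,
      trace_smul, smul_eq_mul]
  rw [eulerLogDeriv_apply, toMul_ofMul, hderiv]
  linear_combination -X * (powSeries M * M.map C).trace * (charpolyRevUnit M).mul_inv

lemma coeff_eulerLogDeriv_charpolyRevUnit (M : Matrix ι ι A) {n : ℕ} (hn : n ≠ 0) :
    coeff n (eulerLogDeriv (.ofMul (charpolyRevUnit M))) = -(M ^ n).trace := by
  obtain ⟨n, rfl⟩ := Nat.exists_eq_succ_of_ne_zero hn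
  rw [eulerLogDeriv_charpolyRevUnit, map_neg, coeff_succ_X_mul, coeff_trace_powSeries_mul_map_C]

end Matrix

theorem IsLefschetzSeq.doldSeq {a : ℕ → ℤ} (ha : IsLefschetzSeq a) : DoldSeq a := by
  obtain ⟨k, l, A, B, h⟩ := ha
  let u := Additive.ofMul (charpolyRevUnit B) - Additive.ofMul (charpolyRevUnit A)
  have hu (n : ℕ) (hn : 1 ≤ n) : PowerSeries.coeff n (eulerLogDeriv u) = a n := by
    rw [map_sub, map_sub, coeff_eulerLogDeriv_charpolyRevUnit B (by omega),
      coeff_eulerLogDeriv_charpolyRevUnit A (by omega), h n hn]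
    ring
  intro n hn
  convert doldSeq_coeff_eulerLogDeriv u n hn using 1
  exact Finset.sum_congr rfl fun d hd ↦ congrArg (_ * ·) (hu d (Nat.pos_of_mem_divisors hd)).symm

section Lefschetz

open Matrix

/-- The elementary periodic sequence equal to `d` at the multiples of `d` and to `0` elsewhere: it
counts the fixed points of the powers of a `d`-cycle. -/
def regSeq (d n : ℕ) : ℤ := if d ∣ n then d else 0

lemma regSeq_add_of_dvd {d N : ℕ} (h : d ∣ N) (n : ℕ) : regSeq d (n + N) = regSeq d n := by
  simp only [regSeq, Nat.dvd_add_left h]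

lemma trace_reindexAlgEquiv {R A m n : Type*} [CommSemiring R] [Semiring A] [Algebra R A]
    [Fintype m] [Fintype n] [DecidableEq m] [DecidableEq n] (e : m ≃ n) (M : Matrix m m A) :
    (reindexAlgEquiv R A e M).trace = M.trace :=
  e.symm.sum_comp fun i ↦ M i i

lemma IsLefschetzSeq.of_fintype {α β : Type*} [Fintype α] [DecidableEq α] [Fintype β]
    [DecidableEq β] {a : ℕ → ℤ} (A : Matrix α α ℤ) (B : Matrix β β ℤ)
    (h : ∀ n, 1 ≤ n → a n = (A ^ n).trace - (B ^ n).trace) : IsLefschetzSeq a :=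
  ⟨_, _, reindexAlgEquiv ℤ ℤ (Fintype.equivFin α) A, reindexAlgEquiv ℤ ℤ (Fintype.equivFin β) B,
    fun n hn ↦ by rw [← map_pow, ← map_pow, trace_reindexAlgEquiv, trace_reindexAlgEquiv, h n hn]⟩

lemma trace_fromBlocks_zero_pow {R m n : Type*} [Semiring R] [Fintype m] [Fintype n]
    [DecidableEq m] [DecidableEq n] (A : Matrix m m R) (B : Matrix n n R) (k : ℕ) :
    (fromBlocks A 0 0 B ^ k).trace = (A ^ k).trace + (B ^ k).trace := by
  simp [fromBlocks_diagonal_pow, trace]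

/-- The additive group of Lefschetz sequences: negation swaps the two matrices, addition takes
block sums. -/
def lefschetzSubgroup : AddSubgroup (ℕ → ℤ) where
  carrier := {a | IsLefschetzSeq a}
  zero_mem' := ⟨0, 0, 0, 0, by simp⟩
  neg_mem' := by
    rintro a ⟨k, l, A, B, h⟩
    exact ⟨l, k, B, A, fun n hn ↦ by rw [Pi.neg_apply, h n hn, neg_sub]⟩
  add_mem' := by
    rintro a b ⟨k, l, A, B, ha⟩ ⟨k', l', A', B', hb⟩
    refine .of_fintype (fromBlocks A 0 0 A') (fromBlocks B 0 0 B') fun n hn ↦ ?_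
    rw [Pi.add_apply, ha n hn, hb n hn, trace_fromBlocks_zero_pow, trace_fromBlocks_zero_pow]
    ring

lemma isLefschetzSeq_ncard_fixedPoints_pow {α : Type*} [Finite α] (σ : Equiv.Perm α) :
    IsLefschetzSeq fun n ↦ ((Function.fixedPoints (σ ^ n)).ncard : ℤ) := by
  classical
  have := Fintype.ofFinite α
  refine .of_fintype (permMatrixHom σ⁻¹ : Matrix α α ℤ) (0 : Matrix Empty Empty ℤ) fun n _ ↦ ?_
  rw [← map_pow, trace_eq_zero_of_isEmpty ((0 : Matrix Empty Empty ℤ) ^ n), sub_zero,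
    permMatrixHom_apply, trace_permutation, inv_pow, inv_inv]

lemma isLefschetzSeq_regSeq {d : ℕ} (hd : d ≠ 0) : IsLefschetzSeq (regSeq d) := by
  have : NeZero d := ⟨hd⟩
  convert isLefschetzSeq_ncard_fixedPoints_pow (Equiv.addRight (1 : ZMod d)) using 2 with n
  have hfix : Function.fixedPoints (Equiv.addRight (1 : ZMod d) ^ n) = {_x | d ∣ n} := by
    ext x
    simp [Function.IsFixedPt, ← ZMod.natCast_eq_zero_iff]
  rw [hfix]
  by_cases h : d ∣ n <;> simp [regSeq, h, Set.ncard_univ]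

end Lefschetz

theorem DoldSeq.exists_eq_sum_regSeq {a : ℕ → ℤ} (ha : DoldSeq a) {T : ℤ}
    (hT : ∀ n, 1 ≤ n → |a n| ≤ T) :
    ∃ (K : ℕ) (c : ℕ → ℤ), ∀ n, 1 ≤ n → a n = ∑ d ∈ Finset.Icc 1 K, c d * regSeq d n := by
  refine ⟨(4 * T ^ 2).toNat, fun d ↦ moebiusTransform a d / d, fun n hn ↦ ?_⟩
  rw [← sum_Icc_ite_dvd_moebiusTransform a hn fun d _ hd ↦
    ha.moebiusTransform_eq_zero hT (Int.lt_of_toNat_lt hd)]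
  refine Finset.sum_congr rfl fun d hd ↦ ?_
  have hdvd : (d : ℤ) ∣ moebiusTransform a d := ha d (Finset.mem_Icc.1 hd).1
  simp only [regSeq, mul_ite, mul_zero, Int.ediv_mul_cancel hdvd]

lemma abs_le_sum_range_of_add_eq {G : Type*} [AddCommGroup G] [LinearOrder G]
    [IsOrderedAddMonoid G] {a : ℕ → G} {N : ℕ} (hN : 0 < N)
    (ha : ∀ n, 1 ≤ n → a (n + N) = a n) {n : ℕ} (hn : 1 ≤ n) :
    |a n| ≤ ∑ i ∈ Finset.range N, |a (i + 1)| := by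
  have hper : Function.Periodic (fun i ↦ |a (i + 1)|) N := fun i ↦ by
    simp only [add_right_comm i N 1, ha _ i.succ_pos]
  obtain ⟨m, rfl⟩ := Nat.exists_eq_add_of_le' hn
  rw [← hper.map_mod_nat m]
  exact Finset.single_le_sum (f := fun i ↦ |a (i + 1)|) (fun _ _ ↦ abs_nonneg _)
    (Finset.mem_range.2 (m.mod_lt hN))

/-- An integer sequence is a periodic Lefschetz sequence if and only if it is a bounded
Dold sequence. -/
theorem periodic_lefschetz_iff_bounded_dold (a : ℕ → ℤ) :
    (IsLefschetzSeq a ∧ ∃ N : ℕ, 1 ≤ N ∧ ∀ n : ℕ, 1 ≤ n → a (n + N) = a n) ↔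
      (DoldSeq a ∧ ∃ T : ℤ, ∀ n : ℕ, 1 ≤ n → |a n| ≤ T) := by
  constructor
  · rintro ⟨ha, N, hN, hper⟩
    exact ⟨ha.doldSeq, _, fun _ ↦ abs_le_sum_range_of_add_eq hN hper⟩
  · rintro ⟨ha, T, hT⟩
    obtain ⟨K, c, hc⟩ := ha.exists_eq_sum_regSeq hT
    have hmem : ∑ d ∈ Finset.Icc 1 K, c d • regSeq d ∈ lefschetzSubgroup := sum_mem fun d hd ↦
      zsmul_mem (isLefschetzSeq_regSeq (Nat.pos_iff_ne_zero.1 (Finset.mem_Icc.1 hd).1)) (c d)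
    obtain ⟨k, l, A, B, hAB⟩ := hmem
    refine ⟨⟨k, l, A, B, fun n hn ↦ ?_⟩, K.factorial, K.factorial_pos, fun n hn ↦ ?_⟩
    · simp [← hAB n hn, hc n hn]
    · rw [hc n hn, hc _ (by omega)]
      refine Finset.sum_congr rfl fun d hd ↦ ?_
      obtain ⟨hd1, hdK⟩ := Finset.mem_Icc.1 hd
      rw [regSeq_add_of_dvd (Nat.dvd_factorial hd1 hdK)]
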